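/- arXiv:2111.05616 — 4 statements merged into one kernel-verified Lean document; each statement's English description precedes it below -/
import Mathlib

section
/- Let H ∈ ℂ^{n×n} be Hermitian positive semidefinite, nonzero and singular, with rank n₁ (so 1 ≤ n₁ < n), and let S ∈ ℂ^{n×n} be skew-Hermitian. Then there exist a unitary matrix U ∈ ℂ^{n×n} and an integer m with 0 ≤ m ≤ min(n₁, n−n₁) such that: (i) Uᴴ H U = [[H₁₁, 0], [0, 0]] with H₁₁ ∈ ℂ^{n₁×n₁} Hermitian positive definite; and (ii) the lower-left n−n₁ by n₁ block of Uᴴ S U (rows n₁+1,…,n and columns 1,…,n₁) equals [[Σ, 0], [0, 0]], where Σ ∈ ℂ^{m×m} is a diagonal matrix with real positive diagonal entries (hence invertible). -/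
open Matrix ComplexOrder

/-!
The unitary is a product of two changes of basis. The spectral theorem for `H`, with the nonzero
eigenvalues listed first (`exists_unitary_diag`), gives `V` such that `Vᴴ H V` is block diagonal
with a positive definite `n₁ × n₁` block and zeros elsewhere. A singular value decomposition
`Pᴴ A Q` of the lower-left block `A` of `Vᴴ S V` (`exists_svd`) gives the second factor
`diag(Q, P)`: it preserves the block form of `H`, replacing the positive definite block by a
congruent one, and turns the block `A` into `Pᴴ A Q`.

The singular value decomposition of `A` comes from applying `exists_unitary_diag` to `Aᴴ A`: the
columns of `A Q` are orthogonal, those beyond the rank vanish, and the others, once normalised,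
extend to an orthonormal basis whose vectors are the columns of `P`.
-/

/-- The spectral theorem for a positive semidefinite matrix, with the nonzero eigenvalues first. -/
lemma exists_unitary_diag {ι : Type*} [Fintype ι] [DecidableEq ι] (H : Matrix ι ι ℂ)
    (hH : H.PosSemidef) (r k : ℕ) (hr : H.rank = r) (hk : r + k = Fintype.card ι) :
    ∃ V : Matrix ι (Fin r ⊕ Fin k) ℂ, Vᴴ * V = 1 ∧
      ∃ d : Fin r → ℝ, (∀ i, 0 < d i) ∧
        Vᴴ * H * V = Matrix.fromBlocks (Matrix.diagonal fun i => (d i : ℂ)) 0 0 0 := by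
  classical
  set ev := hH.isHermitian.eigenvalues with hev
  have c1 : Fintype.card {i // ev i ≠ 0} = r := by
    rw [← hr, hH.isHermitian.rank_eq_card_non_zero_eigs]
  have c2 : Fintype.card {i // ¬ ev i ≠ 0} = k := by
    rw [Fintype.card_subtype_compl, c1]; omega
  let e1 : Fin r ≃ {i // ev i ≠ 0} := (Fintype.equivFinOfCardEq c1).symm
  let e2 : Fin k ≃ {i // ¬ ev i ≠ 0} := (Fintype.equivFinOfCardEq c2).symm
  let σ : Fin r ⊕ Fin k ≃ ι := (Equiv.sumCongr e1 e2).trans (Equiv.sumCompl _)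
  let W : Matrix ι ι ℂ := hH.isHermitian.eigenvectorUnitary
  have hW1 : Wᴴ * W = 1 := Matrix.UnitaryGroup.star_mul_self hH.isHermitian.eigenvectorUnitary
  have hWH : Wᴴ * H * W = diagonal (fun i => (ev i : ℂ)) := by
    have := hH.isHermitian.conjStarAlgAut_star_eigenvectorUnitary
    rw [Unitary.conjStarAlgAut_star_apply] at this
    exact this
  refine ⟨W.submatrix id σ, ?_, fun i => ev (e1 i), ?_, ?_⟩
  · rw [conjTranspose_submatrix, ← submatrix_mul _ _ _ _ _ Function.bijective_id, hW1]
    simp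
  · intro i
    exact lt_of_le_of_ne (hH.eigenvalues_nonneg _) (Ne.symm (e1 i).2)
  · have : (W.submatrix id σ)ᴴ * H * W.submatrix id σ = (Wᴴ * H * W).submatrix σ σ := by
      rw [conjTranspose_submatrix, submatrix_mul _ W _ id _ Function.bijective_id,
        submatrix_mul _ H _ id _ Function.bijective_id, submatrix_id_id]
    rw [this, hWH, submatrix_diagonal_equiv]
    ext i j
    rcases i with i | i <;> rcases j with j | j
    · simp [diagonal_apply, σ]
    · simp
    · simp
    · have : ev (e2 i) = 0 := not_not.mp (e2 i).2
      simp [diagonal_apply, σ, this]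

/-- Singular value decomposition, the singular values being separated into positive and zero. -/
lemma exists_svd (k r : ℕ) (A : Matrix (Fin k) (Fin r) ℂ) :
    ∃ m : ℕ, ∃ _ : m ≤ min r k,
      ∃ P : Matrix (Fin k) (Fin m ⊕ Fin (k - m)) ℂ, ∃ Q : Matrix (Fin r) (Fin m ⊕ Fin (r - m)) ℂ,
        Pᴴ * P = 1 ∧ Qᴴ * Q = 1 ∧
        ∃ d : Fin m → ℝ, (∀ i, 0 < d i) ∧
          Pᴴ * A * Q = Matrix.fromBlocks (Matrix.diagonal fun i => (d i : ℂ)) 0 0 0 := by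
  have hmr : A.rank ≤ r := by simpa using A.rank_le_width
  have hmk : A.rank ≤ k := by simpa using A.rank_le_height
  obtain ⟨Q, hQ1, s, hs, hQ⟩ := exists_unitary_diag (Aᴴ * A)
    (posSemidef_conjTranspose_mul_self A) A.rank (r - A.rank)
    (rank_conjTranspose_mul_self A) (by simp; omega)
  generalize A.rank = m at *
  -- the Gram matrix of the columns of `B = A Q` is diagonal
  set B := A * Q with hB
  have hBB : Bᴴ * B = Matrix.fromBlocks (Matrix.diagonal fun i => (s i : ℂ)) 0 0 0 := by
    rw [← hQ, hB, conjTranspose_mul]; simp only [Matrix.mul_assoc]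
  have hcol0 : ∀ x j, B x (Sum.inr j) = 0 := by
    intro x j
    have h := congrFun (congrFun hBB (Sum.inr j)) (Sum.inr j)
    have h' : star (fun x => B x (Sum.inr j)) ⬝ᵥ (fun x => B x (Sum.inr j)) = 0 := by
      simpa [mul_apply, dotProduct] using h
    exact congrFun (dotProduct_star_self_eq_zero.mp h') x
  have hsq : ∀ i, ((√(s i) : ℝ) : ℂ) ≠ 0 := fun i => by
    exact_mod_cast (Real.sqrt_pos.mpr (hs i)).ne'
  have hsq2 : ∀ i, ((√(s i) : ℝ) : ℂ) * (√(s i) : ℝ) = s i := fun i => by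
    exact_mod_cast Real.mul_self_sqrt (hs i).le
  have hgram : ∀ i j : Fin m, ∑ x, star (B x (Sum.inl i)) * B x (Sum.inl j)
      = if i = j then (s i : ℂ) else 0 := by
    intro i j
    have h := congrFun (congrFun hBB (Sum.inl i)) (Sum.inl j)
    simpa [mul_apply, diagonal_apply] using h
  let v : Fin m ⊕ Fin (k - m) → EuclideanSpace ℂ (Fin k) :=
    Sum.elim (fun i => WithLp.toLp 2 (fun x => ((√(s i) : ℝ) : ℂ)⁻¹ * B x (Sum.inl i))) 0
  have hv : Orthonormal ℂ ((Set.range Sum.inl).domRestrict v) := by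
    rw [orthonormal_iff_ite]
    rintro ⟨_, i, rfl⟩ ⟨_, j, rfl⟩
    have h : inner ℂ (v (Sum.inl i)) (v (Sum.inl j)) =
        ((√(s i) : ℝ) : ℂ)⁻¹ * ((√(s j) : ℝ) : ℂ)⁻¹ *
          ∑ x, star (B x (Sum.inl i)) * B x (Sum.inl j) := by
      simp only [v, Sum.elim_inl, PiLp.inner_apply, RCLike.inner_apply, map_mul, map_inv₀,
        Complex.conj_ofReal, Finset.mul_sum]
      refine Finset.sum_congr rfl fun x _ => ?_
      simp only [starRingEnd_apply]
      ring
    refine (h.trans (by rw [hgram])).trans ?_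
    by_cases hij : i = j
    · subst hij
      have := hsq i
      simp only [if_true, ← hsq2 i]
      field_simp
    · rw [if_neg hij, mul_zero, if_neg]
      exact fun hc => hij (Sum.inl_injective (congrArg Subtype.val hc))
  obtain ⟨b, hb⟩ := hv.exists_orthonormalBasis_extension_of_card_eq (by simp; omega)
  let P : Matrix (Fin k) (Fin m ⊕ Fin (k - m)) ℂ := Matrix.of fun x i => b i x
  have hP : Pᴴ * P = 1 := by
    ext i j
    have h := orthonormal_iff_ite.mp b.orthonormal i j
    rw [one_apply, ← h]
    simp [mul_apply, P, PiLp.inner_apply, mul_comm]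
  let D : Matrix (Fin m ⊕ Fin (k - m)) (Fin m ⊕ Fin (r - m)) ℂ :=
    Matrix.fromBlocks (Matrix.diagonal fun i => ((√(s i) : ℝ) : ℂ)) 0 0 0
  have hBP : B = P * D := by
    ext x j
    rcases j with j | j
    · have hbj : b (Sum.inl j) x = ((√(s j) : ℝ) : ℂ)⁻¹ * B x (Sum.inl j) := by
        rw [hb _ ⟨j, rfl⟩]; rfl
      have := hsq j
      simp only [mul_apply, Fintype.sum_sum_type, fromBlocks_apply₁₁, fromBlocks_apply₂₁,
        diagonal_apply, P, D, of_apply]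
      simp [hbj]
      field_simp
    · simp [mul_apply, hcol0, D]
  refine ⟨m, le_min hmr hmk, P, Q, hP, hQ1, fun i => √(s i),
    fun i => Real.sqrt_pos.mpr (hs i), ?_⟩
  rw [Matrix.mul_assoc, ← hB, hBP, ← Matrix.mul_assoc, hP, Matrix.one_mul]

/-- One stage of the staircase reduction (proof of Lemma 4.1): for a nonzero singular
Hermitian positive semidefinite `H` of rank `n₁` and a skew-Hermitian `S`, there is a
unitary `U` such that `Uᴴ H U = [[H₁₁,0],[0,0]]` with `H₁₁` positive definite, and the
lower-left `(n-n₁)×n₁` block of `Uᴴ S U` has the form `[[Σ,0],[0,0]]` with `Σ` an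
invertible diagonal matrix with positive real diagonal entries. -/
theorem staircase_step
    (n n₁ : ℕ) (h1 : 1 ≤ n₁) (h2 : n₁ < n)
    (H S : Matrix (Fin n) (Fin n) ℂ)
    (hH : H.PosSemidef) (hrank : H.rank = n₁) (hS : Sᴴ = -S) :
    ∃ U : Matrix (Fin n) (Fin n) ℂ, Uᴴ * U = 1 ∧
      ∃ H11 : Matrix (Fin n₁) (Fin n₁) ℂ, H11.PosDef ∧
        Uᴴ * H * U =
          Matrix.reindex (finSumFinEquiv.trans (finCongr (Nat.add_sub_cancel' h2.le)))
            (finSumFinEquiv.trans (finCongr (Nat.add_sub_cancel' h2.le)))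
            (Matrix.fromBlocks H11 0 0 0) ∧
        ∃ m : ℕ, ∃ hm : m ≤ min n₁ (n - n₁),
          ∃ d : Fin m → ℝ, (∀ i, 0 < d i) ∧
            Matrix.toBlocks₂₁
              ((Uᴴ * S * U).submatrix
                (finSumFinEquiv.trans (finCongr (Nat.add_sub_cancel' h2.le)))
                (finSumFinEquiv.trans (finCongr (Nat.add_sub_cancel' h2.le)))) =
              Matrix.reindex
                (finSumFinEquiv.trans
                  (finCongr (Nat.add_sub_cancel' (le_min_iff.mp hm).2)))
                (finSumFinEquiv.trans
                  (finCongr (Nat.add_sub_cancel' (le_min_iff.mp hm).1)))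
                (Matrix.fromBlocks (Matrix.diagonal fun i => (d i : ℂ)) 0 0 0) := by
  obtain ⟨V, hV1, s, hs, hVH⟩ := exists_unitary_diag H hH n₁ (n - n₁) hrank
    (by simp; omega)
  obtain ⟨m, hm, P₀, Q₀, hP, hQ, d, hd, hA⟩ :=
    exists_svd (n - n₁) n₁ (toBlocks₂₁ (Vᴴ * S * V))
  generalize finSumFinEquiv.trans (finCongr (Nat.add_sub_cancel' h2.le)) = e
  have key : ∀ {a b c f x : Type} [Fintype a] [Fintype b] (X : Matrix a c ℂ) (Y : Matrix b f ℂ)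
      (M : Matrix a b ℂ) (g : x → c) {y : Type} (h : y → f),
      (X.submatrix id g)ᴴ * M * Y.submatrix id h = (Xᴴ * M * Y).submatrix g h := by
    intros; rfl
  have key' : ∀ {a c x : Type} [Fintype a] (X : Matrix a c ℂ) (g : x → c),
      (X.submatrix id g)ᴴ * X.submatrix id g = (Xᴴ * X).submatrix g g := by
    intros; rfl
  let eP := finSumFinEquiv.trans (finCongr (Nat.add_sub_cancel' (le_min_iff.mp hm).2))
  let eQ := finSumFinEquiv.trans (finCongr (Nat.add_sub_cancel' (le_min_iff.mp hm).1))
  let P : Matrix (Fin (n - n₁)) (Fin (n - n₁)) ℂ := P₀.submatrix id eP.symm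
  let Q : Matrix (Fin n₁) (Fin n₁) ℂ := Q₀.submatrix id eQ.symm
  have hPP : Pᴴ * P = 1 := by rw [key', hP, submatrix_one_equiv]
  have hQQ : Qᴴ * Q = 1 := by rw [key', hQ, submatrix_one_equiv]
  let Z : Matrix (Fin n₁ ⊕ Fin (n - n₁)) (Fin n₁ ⊕ Fin (n - n₁)) ℂ := fromBlocks Q 0 0 P
  have hZ : ∀ M : Matrix (Fin n) (Fin n) ℂ,
      (V * Z)ᴴ * M * (V * Z) = Zᴴ * (Vᴴ * M * V) * Z := by
    intro M
    simp only [conjTranspose_mul, Matrix.mul_assoc]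
  refine ⟨(V * Z).submatrix id e.symm, ?_, Qᴴ * diagonal (fun i => (s i : ℂ)) * Q, ?_, ?_,
    m, hm, d, hd, ?_⟩
  · have : (V * Z)ᴴ * (V * Z) = 1 := by
      have := hZ 1
      rw [Matrix.mul_one, Matrix.mul_one, hV1, Matrix.mul_one] at this
      rw [this]
      simp [Z, fromBlocks_conjTranspose, fromBlocks_multiply, hPP, hQQ]
    rw [key', this, submatrix_one_equiv]
  · refine PosDef.conjTranspose_mul_mul_same (PosDef.diagonal fun i => ?_) ?_
    · exact_mod_cast hs i
    · exact Matrix.mulVec_injective_of_isUnit (IsUnit.of_mul_eq_one_right _ hQQ)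
  · rw [key, hZ, hVH, reindex_apply]
    simp [Z, fromBlocks_conjTranspose, fromBlocks_multiply]
  · rw [key, hZ, submatrix_submatrix, Equiv.symm_comp_self, submatrix_id_id,
      reindex_apply, ← hA, ← key, ← fromBlocks_toBlocks (Vᴴ * S * V)]
    simp [Z, fromBlocks_conjTranspose, fromBlocks_multiply, P, Q, eP, eQ]
end

section
/- Let M = [[A, B], [C, D]] be a complex block matrix (with A square and invertible, D square) whose Hermitian part ½(M + Mᴴ) is positive semidefinite. Then the Schur complement 𝒮 = D − C·A⁻¹·B also has positive semidefinite Hermitian part ½(𝒮 + 𝒮ᴴ). -/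
/-!
The Schur complement is a congruence compression of `M` itself: with `T` the block column
`[-A⁻¹ B; 1]`, block elimination gives `M T = [0; 𝒮]`, hence `Tᴴ M T = 𝒮`. Taking adjoints,
`Tᴴ (M + Mᴴ) T = 𝒮 + 𝒮ᴴ`, and the congruence `X ↦ Tᴴ X T` preserves positive semidefiniteness.
-/

open Matrix ComplexOrder

/-- Corollary 4.3: every Schur complement of a matrix with positive semidefinite
Hermitian part again has positive semidefinite Hermitian part. -/
theorem schur_complement_posSemidef_hermitian_part
    (p q : ℕ) (A : Matrix (Fin p) (Fin p) ℂ) (B : Matrix (Fin p) (Fin q) ℂ)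
    (C : Matrix (Fin q) (Fin p) ℂ) (D : Matrix (Fin q) (Fin q) ℂ)
    (hA : IsUnit A)
    (hM : ((1 / 2 : ℂ) •
        (Matrix.fromBlocks A B C D + (Matrix.fromBlocks A B C D)ᴴ)).PosSemidef) :
    ((1 / 2 : ℂ) •
        ((D - C * A⁻¹ * B) + (D - C * A⁻¹ * B)ᴴ)).PosSemidef := by
  have hdet : IsUnit A.det := (Matrix.isUnit_iff_isUnit_det A).mp hA
  have key : (fromRows (-(A⁻¹ * B)) (1 : Matrix (Fin q) (Fin q) ℂ))ᴴ * fromBlocks A B C D *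
      fromRows (-(A⁻¹ * B)) (1 : Matrix (Fin q) (Fin q) ℂ) = D - C * A⁻¹ * B := by
    rw [Matrix.mul_assoc, fromBlocks_mul_fromRows, conjTranspose_fromRows_eq_fromCols_conjTranspose,
      fromCols_mul_fromRows]
    simp only [Matrix.mul_neg, Matrix.mul_one, Matrix.mul_nonsing_inv_cancel_left A B hdet,
      conjTranspose_one, Matrix.one_mul, neg_add_cancel, Matrix.mul_zero, zero_add,
      Matrix.mul_assoc]
    abel
  have h := hM.conjTranspose_mul_mul_same
    (fromRows (-(A⁻¹ * B)) (1 : Matrix (Fin q) (Fin q) ℂ))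
  rw [Matrix.mul_smul, Matrix.smul_mul, Matrix.mul_add, Matrix.add_mul] at h
  have key' := congrArg conjTranspose key
  rw [conjTranspose_mul, conjTranspose_mul, conjTranspose_conjTranspose,
    ← Matrix.mul_assoc] at key'
  rwa [key, key'] at h
end

section
/- Let H ∈ ℂ^{n×n} be Hermitian positive definite and S ∈ ℂ^{n×n} skew-Hermitian, and set K = H⁻¹·S. Then the matrix I + K is invertible, and B = (I + K)ᴴ·H·(I + K) is Hermitian positive definite. -/
/-!
Since `S` is skew-Hermitian, the cross terms in `B = (1 + K)ᴴ H (1 + K)` cancel, leaving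
`B = H + Sᴴ H⁻¹ S`, the sum of a positive definite and a positive semidefinite matrix. So `B` is
positive definite, hence invertible, and its right factor `1 + K` is invertible as well.
-/

open Matrix ComplexOrder

/-- For `H` Hermitian positive definite and `S` skew-Hermitian with `K = H⁻¹ S`,
the matrix `I + K` is invertible and `B = (I + K)ᴴ H (I + K)` is Hermitian
positive definite. -/
theorem one_add_K_invertible_and_B_posDef
    (n : ℕ) (H S : Matrix (Fin n) (Fin n) ℂ)
    (hH : H.PosDef) (hS : Sᴴ = -S) :
    IsUnit (1 + H⁻¹ * S) ∧
      ((1 + H⁻¹ * S)ᴴ * H * (1 + H⁻¹ * S)).PosDef := by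
  have hdet : IsUnit H.det := (isUnit_iff_isUnit_det H).mp hH.isUnit
  have hHK : H * (1 + H⁻¹ * S) = H + S := by
    rw [mul_add, mul_one, mul_nonsing_inv_cancel_left H S hdet]
  have hK : (1 + H⁻¹ * S)ᴴ = 1 - S * H⁻¹ := by
    rw [conjTranspose_add, conjTranspose_one, conjTranspose_mul, hS, hH.inv.isHermitian.eq,
      neg_mul, sub_eq_add_neg]
  have hB : (1 + H⁻¹ * S)ᴴ * H * (1 + H⁻¹ * S) = H + Sᴴ * H⁻¹ * S := by
    rw [mul_assoc, hHK, hK, hS, sub_mul, one_mul, mul_add,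
      nonsing_inv_mul_cancel_right H S hdet, neg_mul, neg_mul]
    abel
  have hpos : ((1 + H⁻¹ * S)ᴴ * H * (1 + H⁻¹ * S)).PosDef := by
    rw [hB]
    exact hH.add_posSemidef (hH.inv.posSemidef.conjTranspose_mul_mul_same S)
  refine ⟨?_, hpos⟩
  have hu := (isUnit_iff_isUnit_det _).mp hpos.isUnit
  rw [det_mul] at hu
  exact (isUnit_iff_isUnit_det _).mpr (isUnit_of_mul_isUnit_right hu)
end

section
/- Let H₁₁ ∈ ℂ^{n₁×n₁} be Hermitian positive definite, S₁₁ ∈ ℂ^{n₁×n₁} and S₂₂ ∈ ℂ^{n₂×n₂} skew-Hermitian, and S₂₁ ∈ ℂ^{n₂×n₁} of full row rank n₂ (with n₂ ≥ 1). Set A₁₁ = H₁₁ + S₁₁ (which is invertible) and S₁₂ = −S₂₁ᴴ. Then the Schur complement 𝒮 = S₂₂ − S₂₁·A₁₁⁻¹·S₁₂ has positive definite Hermitian part ½(𝒮 + 𝒮ᴴ). -/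
/-!
Write `A = H₁₁ + S₁₁`, so that `A + Aᴴ = 2 H₁₁`. If `A x = 0` then `2 xᴴ H₁₁ x = xᴴ (A + Aᴴ) x = 0`,
so `x = 0` and `A` is invertible. Moreover `A⁻¹ + A⁻ᴴ = A⁻¹ (A + Aᴴ) A⁻ᴴ = 2 A⁻¹ H₁₁ A⁻ᴴ`, and the
skew-Hermitian block `S₂₂` drops out of the Hermitian part, so the Hermitian part of the Schur
complement is the congruence `(S₂₁ A⁻¹) H₁₁ (S₂₁ A⁻¹)ᴴ`. It is positive definite because
`S₂₁ A⁻¹` has linearly independent rows.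
-/


open Matrix ComplexOrder

theorem isUnit_posDef_add_skew {n : ℕ} {H S : Matrix (Fin n) (Fin n) ℂ}
    (hH : H.PosDef) (hS : Sᴴ = -S) : IsUnit (H + S) := by
  rw [← Matrix.mulVec_injective_iff_isUnit, ← Matrix.coe_mulVecLin,
    injective_iff_map_eq_zero]
  intro x hx
  rw [Matrix.mulVecLin_apply] at hx
  by_contra hne
  have hpos := hH.dotProduct_mulVec_pos hne
  have hsum : star x ⬝ᵥ (H *ᵥ x) + star x ⬝ᵥ (S *ᵥ x) = 0 := by
    rw [← dotProduct_add, ← Matrix.add_mulVec, hx, dotProduct_zero]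
  -- The conjugate of `xᴴ A x` is `xᴴ Aᴴ x`, and `Aᴴ = H - S`.
  have hdiff : star x ⬝ᵥ (H *ᵥ x) - star x ⬝ᵥ (S *ᵥ x) = 0 := by
    have hA : (H + S)ᴴ = H - S := by
      rw [conjTranspose_add, hH.isHermitian.eq, hS, sub_eq_add_neg]
    rw [← dotProduct_sub, ← Matrix.sub_mulVec, ← hA, dotProduct_mulVec, ← star_mulVec, hx,
      star_zero, zero_dotProduct]
  have hzero : star x ⬝ᵥ (H *ᵥ x) = 0 := by linear_combination (hsum + hdiff) / 2
  exact hpos.ne' hzero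

theorem vecMul_injective_of_rank_eq {m n : ℕ} {M : Matrix (Fin m) (Fin n) ℂ}
    (hM : M.rank = m) : Function.Injective M.vecMul := by
  rw [Matrix.vecMul_injective_iff, linearIndependent_iff_card_eq_finrank_span,
    Fintype.card_fin, Set.finrank, ← Matrix.rank_eq_finrank_span_row, hM]

/-- Since `B + Bᴴ = B (A + Aᴴ) Bᴴ` for `B = A⁻¹`, the Hermitian part of the inverse of
`A = H + S` is the congruence of `H` by `A⁻¹`. -/
theorem inv_add_conjTranspose_inv {n : ℕ} {H S : Matrix (Fin n) (Fin n) ℂ}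
    (hH : H.PosDef) (hS : Sᴴ = -S) :
    (H + S)⁻¹ + ((H + S)⁻¹)ᴴ = (2 : ℂ) • ((H + S)⁻¹ * H * ((H + S)⁻¹)ᴴ) := by
  have hu := (Matrix.isUnit_iff_isUnit_det _).mp (isUnit_posDef_add_skew hH hS)
  have h2 : (2 : ℂ) • H = (H + S)ᴴ + (H + S) := by
    rw [conjTranspose_add, hH.isHermitian.eq, hS, two_smul]
    abel
  have h1 : (H + S)⁻¹ * (H + S) = 1 := Matrix.nonsing_inv_mul _ hu
  have h1' : (H + S)ᴴ * ((H + S)⁻¹)ᴴ = 1 := by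
    rw [← conjTranspose_mul, h1, conjTranspose_one]
  rw [← Matrix.smul_mul, ← Matrix.mul_smul, h2, Matrix.mul_add, Matrix.add_mul, h1,
    Matrix.one_mul, Matrix.mul_assoc, h1', Matrix.mul_one]

/-- Key positivity claim in the Schur complement reduction of Lemma 4.2: with
`A₁₁ = H₁₁ + S₁₁` (invertible, since `H₁₁` is positive definite), `S₁₂ = -S₂₁ᴴ`,
and `S₂₁` of full row rank, the Schur complement `S₂₂ - S₂₁ A₁₁⁻¹ S₁₂` has
positive definite Hermitian part. -/
theorem schur_complement_posDef_hermitian_part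
    (n₁ n₂ : ℕ) (hn₂ : 1 ≤ n₂)
    (H11 S11 : Matrix (Fin n₁) (Fin n₁) ℂ)
    (S22 : Matrix (Fin n₂) (Fin n₂) ℂ)
    (S21 : Matrix (Fin n₂) (Fin n₁) ℂ)
    (hH11 : H11.PosDef) (hS11 : S11ᴴ = -S11) (hS22 : S22ᴴ = -S22)
    (hS21 : S21.rank = n₂) :
    IsUnit (H11 + S11) ∧
      ((1 / 2 : ℂ) •
        ((S22 - S21 * (H11 + S11)⁻¹ * (-S21ᴴ)) +
          (S22 - S21 * (H11 + S11)⁻¹ * (-S21ᴴ))ᴴ)).PosDef := by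
  have hu := isUnit_posDef_add_skew hH11 hS11
  refine ⟨hu, ?_⟩
  have hinj : Function.Injective (S21 * (H11 + S11)⁻¹).vecMul := by
    have hu' : IsUnit (H11 + S11)⁻¹ := (Matrix.isUnit_nonsing_inv_iff).mpr hu
    intro x y hxy
    apply vecMul_injective_of_rank_eq hS21
    apply Matrix.vecMul_injective_of_isUnit hu'
    simpa only [Matrix.vecMul_vecMul] using hxy
  convert hH11.mul_mul_conjTranspose_same hinj using 1
  have hkey : S21 * ((H11 + S11)⁻¹ + ((H11 + S11)⁻¹)ᴴ) * S21ᴴ =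
      (2 : ℂ) • (S21 * (H11 + S11)⁻¹ * H11 * (S21 * (H11 + S11)⁻¹)ᴴ) := by
    rw [inv_add_conjTranspose_inv hH11 hS11]
    simp only [conjTranspose_mul, Matrix.mul_smul, Matrix.smul_mul, Matrix.mul_assoc]
  have hsum : (S22 - S21 * (H11 + S11)⁻¹ * (-S21ᴴ)) +
      (S22 - S21 * (H11 + S11)⁻¹ * (-S21ᴴ))ᴴ =
      S21 * ((H11 + S11)⁻¹ + ((H11 + S11)⁻¹)ᴴ) * S21ᴴ := by
    rw [Matrix.mul_neg, sub_neg_eq_add, conjTranspose_add, hS22, conjTranspose_mul,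
      conjTranspose_mul, conjTranspose_conjTranspose, Matrix.mul_add, Matrix.add_mul,
      Matrix.mul_assoc S21 ((H11 + S11)⁻¹)ᴴ]
    abel
  rw [hsum, hkey, smul_smul]
  norm_num
end
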